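/- For every real β ≥ 0, every integer n ≥ 0, and every z ∈ ℂ, the series Σ_{m=n}^{∞} (n!/Γ(β+m+1)) · |Z^{(β)}_{m,n}(z, conj(z))|² converges, and its sum equals E_n^{(β)}(|z|²), where for x ≥ 0, E_n^{(β)}(x) := ((1+β)_n/(n!·Γ(β+1))) · Σ_{k=0}^{n} Σ_{k'=0}^{n} [(−n)_k (−n)_{k'} / (k!·k'!·(1+β)_k·(1+β)_{k'})] · x^{k+k'} · Σ_{j=0}^{∞} [(β+n+1)_j / ((β+k+1)_j (β+k'+1)_j)] · x^{j} (the inner series converging for all x). -/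

import Mathlib

open Finset

/-- Pochhammer symbol `(a)_j = a (a+1) ⋯ (a+j-1)`. -/
noncomputable def poch (a : ℝ) (j : ℕ) : ℝ := ∏ i ∈ Finset.range j, (a + i)

/-- The generalized 2D Laguerre polynomial `Z^{(β)}_{m,n}(z,w)` (for `m ≥ n`). -/
noncomputable def Zc (β : ℝ) (m n : ℕ) (z w : ℂ) : ℂ :=
  ∑ k ∈ Finset.range (n + 1),
    (((-1 : ℝ) ^ (n - k) * poch (β + 1) m /
        (k.factorial * (n - k).factorial * poch (β + 1) (m - k)) : ℝ) : ℂ) *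
      z ^ (m - k) * w ^ (n - k)

/-- The sum `E_n^{(β)}(x)` of the series `Σ_{m≥n} |Z^{(β)}_{m,n}|²/C(m,n,β)`, expressed via
the terminating double sum with inner `₂F₂` series. -/
noncomputable def Efn (β : ℝ) (n : ℕ) (x : ℝ) : ℝ :=
  (poch (1 + β) n / (n.factorial * Real.Gamma (β + 1))) *
    ∑ k ∈ Finset.range (n + 1), ∑ k' ∈ Finset.range (n + 1),
      poch (-(n : ℝ)) k * poch (-(n : ℝ)) k' /
          (k.factorial * k'.factorial * poch (1 + β) k * poch (1 + β) k') *
        x ^ (k + k') *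
        ∑' j : ℕ, poch (β + n + 1) j / (poch (β + k + 1) j * poch (β + k' + 1) j) * x ^ j


lemma poch_zero' (a : ℝ) : poch a 0 = 1 := by simp [poch]

lemma poch_succ' (a : ℝ) (j : ℕ) : poch a (j + 1) = poch a j * (a + j) := by
  simp [poch, Finset.prod_range_succ]

lemma poch_pos' {a : ℝ} (ha : 0 < a) (j : ℕ) : 0 < poch a j := by
  unfold poch
  exact Finset.prod_pos fun i _ => by positivity

lemma poch_add' (a : ℝ) (k j : ℕ) : poch a (k + j) = poch a k * poch (a + k) j := by
  unfold poch
  rw [Finset.prod_range_add]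
  congr 1
  refine Finset.prod_congr rfl fun i _ => ?_
  push_cast; ring

lemma poch_neg' (n k : ℕ) (hk : k ≤ n) :
    poch (-(n : ℝ)) k * ((n - k).factorial : ℝ) = (-1) ^ k * (n.factorial : ℝ) := by
  induction k with
  | zero => simp [poch_zero']
  | succ k ih =>
    have h := ih (by omega)
    have e : n - k = (n - (k + 1)) + 1 := by omega
    have hc : ((n - (k + 1) : ℕ) : ℝ) + 1 = (n : ℝ) - k := by
      have : n = (n - (k + 1)) + 1 + k := by omega
      have h2 : (n : ℝ) = ((n - (k + 1) : ℕ) : ℝ) + 1 + k := by exact_mod_cast this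
      linarith
    rw [e, Nat.factorial_succ] at h
    push_cast at h
    rw [hc] at h
    rw [poch_succ', pow_succ]
    linear_combination -h

lemma gamma_poch' {a : ℝ} (ha : 0 < a) (m : ℕ) :
    Real.Gamma (a + m) = Real.Gamma a * poch a m := by
  induction m with
  | zero => simp [poch_zero']
  | succ m ih =>
    have : a + ((m + 1 : ℕ) : ℝ) = (a + m) + 1 := by push_cast; ring
    rw [this, Real.Gamma_add_one (by positivity), ih, poch_succ']
    ring

lemma inner_summable' (β : ℝ) (hβ : 0 ≤ β) (n k k' : ℕ) (x : ℝ) (hx : 0 ≤ x) :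
    Summable (fun j : ℕ =>
      poch (β + n + 1) j / (poch (β + k + 1) j * poch (β + k' + 1) j) * x ^ j) := by
  refine summable_of_ratio_norm_eventually_le (r := 1 / 2) (by norm_num) ?_
  filter_upwards [Filter.eventually_ge_atTop (Nat.ceil (2 * ((n : ℝ) + 1) * x))] with j hj
  have hj' : 2 * ((n : ℝ) + 1) * x ≤ j := Nat.ceil_le.mp hj
  have p1 := poch_pos' (a := β + n + 1) (by positivity) j
  have p2 := poch_pos' (a := β + k + 1) (by positivity) j
  have p3 := poch_pos' (a := β + k' + 1) (by positivity) j
  simp only [poch_succ', pow_succ]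
  have q1 : 0 < β + n + 1 + j := by positivity
  have q2 : 0 < β + k + 1 + j := by positivity
  have q3 : 0 < β + k' + 1 + j := by positivity
  rw [Real.norm_of_nonneg (by positivity), Real.norm_of_nonneg (by positivity)]
  have key : (β + n + 1 + j) / ((β + k + 1 + j) * (β + k' + 1 + j)) * x ≤ 1 / 2 := by
    rw [div_mul_eq_mul_div, div_le_div_iff₀ (by positivity) (by norm_num)]
    have h1 : β + n + 1 + j ≤ (n + 1) * (β + k + 1 + j) := by
      have : (0 : ℝ) ≤ n * (β + k + j) + k := by positivity
      nlinarith
    have h2 : 2 * ((n : ℝ) + 1) * x ≤ β + k' + 1 + j := by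
      have : (0 : ℝ) ≤ k' := by positivity
      linarith
    calc (β + n + 1 + j) * x * 2 ≤ ((n + 1) * (β + k + 1 + j)) * x * 2 := by gcongr
      _ = (β + k + 1 + j) * (2 * ((n : ℝ) + 1) * x) := by ring
      _ ≤ (β + k + 1 + j) * (β + k' + 1 + j) := by gcongr
      _ = _ := by ring
  calc _ = ((β + n + 1 + j) / ((β + k + 1 + j) * (β + k' + 1 + j)) * x) *
        (poch (β + n + 1) j / (poch (β + k + 1) j * poch (β + k' + 1) j) * x ^ j) := by
        field_simp
    _ ≤ _ := by gcongr

lemma Zc_eq' (β : ℝ) (n j : ℕ) (z : ℂ) :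
    Zc β (n + j) n z (starRingEnd ℂ z) =
      z ^ j * ((∑ k ∈ Finset.range (n + 1), (-1 : ℝ) ^ k * poch (β + 1) (n + j) /
        ((n - k).factorial * k.factorial * poch (β + 1) (k + j)) *
          Complex.normSq z ^ k : ℝ) : ℂ) := by
  unfold Zc
  rw [← Finset.sum_range_reflect, Complex.ofReal_sum, Finset.mul_sum]
  refine Finset.sum_congr rfl fun k hk => ?_
  have hk' : k ≤ n := by simpa [Nat.lt_succ_iff] using hk
  have e1 : n + 1 - 1 - k = n - k := by omega
  have e2 : n - (n - k) = k := by omega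
  have e3 : n + j - (n - k) = k + j := by omega
  rw [e1, e2, e3, Complex.ofReal_mul, Complex.ofReal_pow, ← Complex.mul_conj]
  ring

lemma normZ' (β : ℝ) (n j : ℕ) (z : ℂ) :
    ‖Zc β (n + j) n z (starRingEnd ℂ z)‖ ^ 2 = Complex.normSq z ^ j *
      (∑ k ∈ Finset.range (n + 1), (-1 : ℝ) ^ k * poch (β + 1) (n + j) /
        ((n - k).factorial * k.factorial * poch (β + 1) (k + j)) *
          Complex.normSq z ^ k) ^ 2 := by
  rw [Zc_eq', norm_mul, mul_pow, Complex.norm_real, Real.norm_eq_abs, sq_abs, norm_pow,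
    ← pow_mul, mul_comm j 2, pow_mul, ← Complex.normSq_eq_norm_sq]

/-- Summation formula: `Σ_{m=n}^∞ (n!/Γ(β+m+1)) |Z^{(β)}_{m,n}(z, z̄)|² = E_n^{(β)}(|z|²)`,
with the inner hypergeometric series converging for all arguments. -/
theorem laguerre2D_summation (β : ℝ) (hβ : 0 ≤ β) (n : ℕ) (z : ℂ) :
    (∀ k k' : ℕ, Summable (fun j : ℕ =>
      poch (β + n + 1) j / (poch (β + k + 1) j * poch (β + k' + 1) j) *
        Complex.normSq z ^ j)) ∧
    HasSum
      (fun j : ℕ =>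
        (n.factorial : ℝ) / Real.Gamma (β + (n + j) + 1) *
          ‖Zc β (n + j) n z (starRingEnd ℂ z)‖ ^ 2)
      (Efn β n (Complex.normSq z)) := by
  have hx := Complex.normSq_nonneg z
  have hs := fun k k' => inner_summable' β hβ n k k' _ hx
  refine ⟨hs, ?_⟩
  have H := (hasSum_sum (s := Finset.range (n + 1)) fun k _ =>
    hasSum_sum (s := Finset.range (n + 1)) fun k' _ => ((hs k k').hasSum.mul_left
      (poch (-(n : ℝ)) k * poch (-(n : ℝ)) k' /
          (k.factorial * k'.factorial * poch (1 + β) k * poch (1 + β) k') *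
        Complex.normSq z ^ (k + k')))).mul_left
      (poch (1 + β) n / (n.factorial * Real.Gamma (β + 1)))
  unfold Efn
  refine H.congr_fun ?_
  intro j
  have hG : 0 < Real.Gamma (β + 1) := Real.Gamma_pos_of_pos (by positivity)
  have eG : Real.Gamma (β + (n + j) + 1) = Real.Gamma (β + 1) * poch (β + 1) (n + j) := by
    rw [← gamma_poch' (by positivity)]; congr 1; push_cast; ring
  rw [normZ', eG, sq, Finset.sum_mul_sum, Finset.mul_sum, Finset.mul_sum, Finset.mul_sum]
  refine Finset.sum_congr rfl fun k hk => ?_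
  rw [Finset.mul_sum, Finset.mul_sum, Finset.mul_sum]
  refine Finset.sum_congr rfl fun k' hk' => ?_
  have hk1 : k ≤ n := by simpa [Nat.lt_succ_iff] using hk
  have hk1' : k' ≤ n := by simpa [Nat.lt_succ_iff] using hk'
  have f1 : poch (-(n : ℝ)) k = (-1) ^ k * (n.factorial : ℝ) / ((n - k).factorial : ℝ) := by
    rw [eq_div_iff (by positivity)]; exact poch_neg' n k hk1
  have f2 : poch (-(n : ℝ)) k' = (-1) ^ k' * (n.factorial : ℝ) / ((n - k').factorial : ℝ) := by
    rw [eq_div_iff (by positivity)]; exact poch_neg' n k' hk1'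
  have c : ∀ i : ℕ, β + i + 1 = β + 1 + i := fun i => by ring
  rw [f1, f2, poch_add', poch_add', poch_add', c n, c k, c k', add_comm 1 β]
  have b1 : (0 : ℝ) < β + 1 := by positivity
  have r1 := poch_pos' b1 n
  have r2 := poch_pos' b1 k
  have r3 := poch_pos' b1 k'
  have r4 := poch_pos' (a := β + 1 + n) (by positivity) j
  have r5 := poch_pos' (a := β + 1 + k) (by positivity) j
  have r6 := poch_pos' (a := β + 1 + k') (by positivity) j
  have g1 : (0 : ℝ) < n.factorial := by positivity
  have g2 : (0 : ℝ) < k.factorial := by positivity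
  have g3 : (0 : ℝ) < k'.factorial := by positivity
  have g4 : (0 : ℝ) < (n - k).factorial := by positivity
  have g5 : (0 : ℝ) < (n - k').factorial := by positivity
  generalize Complex.normSq z = x
  rw [pow_add]
  field_simp
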